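/- arXiv:1601.04268 — 3 statements merged into one kernel-verified Lean document; each statement's English description precedes it below -/
import Mathlib

section
/- Let K = [[k₁,k₂],[k₂,k₁]] be a positive definite real 2×2 matrix. Then there exist an invertible real 2×2 matrix K₀ and ε ∈ {1,−1} such that K₀ K ᵗK₀ = I and qK₀ = ε K₀ q. -/
open Matrix

noncomputable section

abbrev Mat2R : Type := Matrix (Fin 2) (Fin 2) ℝ

/-- `q = [[0,1],[1,0]]`. -/
def qR : Mat2R := !![0, 1; 1, 0]

/-- for a positive definite real bi-symmetric `K = [[k₁,k₂],[k₂,k₁]]`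
there are an invertible real `K₀` and `ε = ±1` with `K₀ K ᵗK₀ = I` and `q K₀ = ε K₀ q`. -/
theorem stmt_3 (K : Mat2R) (hsym : K 1 1 = K 0 0 ∧ K 1 0 = K 0 1) (hpos : K.PosDef) :
    ∃ (K₀ : Mat2R) (ε : ℝ), (ε = 1 ∨ ε = -1) ∧ IsUnit K₀ ∧
      K₀ * K * K₀ᵀ = 1 ∧ qR * K₀ = ε • (K₀ * qR) := by
  obtain ⟨h11, h10⟩ := hsym
  have hd := hpos.det_pos
  have h0 : 0 < K 0 0 := hpos.diag_pos
  rw [Matrix.det_fin_two, h11, h10] at hd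
  have hp : 0 < K 0 0 + K 0 1 := by nlinarith
  have hm : 0 < K 0 0 - K 0 1 := by nlinarith
  obtain ⟨u, hu⟩ : ∃ u : ℝ, u ^ 2 * (K 0 0 + K 0 1) = 1 :=
    ⟨(√(K 0 0 + K 0 1))⁻¹, by
      rw [inv_pow, Real.sq_sqrt hp.le, inv_mul_cancel₀ hp.ne']⟩
  obtain ⟨v, hv⟩ : ∃ v : ℝ, v ^ 2 * (K 0 0 - K 0 1) = 1 :=
    ⟨(√(K 0 0 - K 0 1))⁻¹, by
      rw [inv_pow, Real.sq_sqrt hm.le, inv_mul_cancel₀ hm.ne']⟩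
  have key : !![(u + v) / 2, (u - v) / 2; (u - v) / 2, (u + v) / 2] * K *
      (!![(u + v) / 2, (u - v) / 2; (u - v) / 2, (u + v) / 2] : Mat2R)ᵀ = 1 := by
    ext i j
    fin_cases i <;> fin_cases j <;>
      simp [Matrix.mul_apply, Matrix.vecMul, dotProduct, Fin.sum_univ_two, h11, h10] <;> linarith
  refine ⟨!![(u + v) / 2, (u - v) / 2; (u - v) / 2, (u + v) / 2], 1, Or.inl rfl, ?_, key, ?_⟩
  · rw [Matrix.mul_assoc] at key
    exact IsUnit.of_mul_eq_one _ key
  · ext i j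
    fin_cases i <;> fin_cases j <;> simp [qR, Matrix.mul_apply, Fin.sum_univ_two]
end
end

section
/- Every bijective holomorphic map f from Ĥ₂ onto itself with holomorphic inverse (Ĥ₂ regarded as an open subset of ℂ² via Z = [[τ,z],[z,τ]] ↦ (τ,z)) is of the form f(Z) = M<Z> for some M ∈ Ω̂₂. Moreover, two elements M, M′ ∈ Ω̂₂ induce the same map of Ĥ₂ if and only if M′ ∈ {M, −M, QM, −QM}, so the group of all biholomorphic self-maps of Ĥ₂ is isomorphic to the quotient group Ω̂₂/{±I, ±Q}. -/
open Matrix Complex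

noncomputable section

abbrev Mat2 : Type := Matrix (Fin 2) (Fin 2) ℂ
abbrev Mat4 : Type := Matrix (Fin 2 ⊕ Fin 2) (Fin 2 ⊕ Fin 2) ℝ

/-- `J = [[0, I₂],[−I₂, 0]]` (4×4). -/
def Jmat : Mat4 := Matrix.fromBlocks 0 1 (-1) 0

/-- `Q = diag(q, q)` (4×4). -/
def Qmat : Mat4 := Matrix.fromBlocks qR 0 0 qR

/-- `Ω₂ = Sp(4,ℝ) = {M : ᵗM J M = J}`. -/
def Omega2 : Set Mat4 := {M | Mᵀ * Jmat * M = Jmat}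

/-- The new Siegel upper half space `Ĥ₂`: bi-symmetric `Z = [[τ,z],[z,τ]]` with `Im τ > |Im z|`. -/
def Hhat : Set Mat2 :=
  {Z | Z 1 1 = Z 0 0 ∧ Z 1 0 = Z 0 1 ∧ |(Z 0 1).im| < (Z 0 0).im}

/-- The action `M<Z> = (AZ+B)(CZ+D)⁻¹` of a real 4×4 matrix in 2×2 blocks on `Z ∈ ℂ^{2×2}`. -/
def act (M : Mat4) (Z : Mat2) : Mat2 :=
  (M.toBlocks₁₁.map Complex.ofReal * Z + M.toBlocks₁₂.map Complex.ofReal) *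
    (M.toBlocks₂₁.map Complex.ofReal * Z + M.toBlocks₂₂.map Complex.ofReal)⁻¹

/-- `Ω̂₂ = {M ∈ Ω₂ : M<Z> ∈ Ĥ₂ for all Z ∈ Ĥ₂}`. -/
def OmegaHat : Set Mat4 := {M | M ∈ Omega2 ∧ ∀ Z ∈ Hhat, act M Z ∈ Hhat}

/-- The bi-symmetric matrix `[[τ,z],[z,τ]]` associated to `(τ, z) ∈ ℂ²`. -/
def mk2 (p : ℂ × ℂ) : Mat2 := !![p.1, p.2; p.2, p.1]

/-- `Ĥ₂` regarded as a subset of `ℂ²`. -/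
def HhatP : Set (ℂ × ℂ) := {p | mk2 p ∈ Hhat}


lemma slice_lin (F : ℂ × ℂ → ℂ) (hd : DifferentiableOn ℂ F (Metric.ball 0 1))
    (hF : ∀ p ∈ Metric.ball (0 : ℂ × ℂ) 1, ‖F p‖ ≤ ‖p‖) (h : ‖F (1/2, 0)‖ = 1/2) :
    ∃ α : ℂ, ‖α‖ = 1 ∧ ∀ p ∈ Metric.ball (0 : ℂ × ℂ) 1, F p = α * p.1 := by
  have hmem : ∀ z w : ℂ, ‖z‖ < 1 → ‖w‖ < 1 → (z, w) ∈ Metric.ball (0 : ℂ × ℂ) 1 := by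
    intro z w hz hw
    simp [Prod.norm_def, hz, hw]
  have hF0 : F 0 = 0 := by simpa using hF 0 (by simp)
  have hs1 : ∀ w : ℂ, ‖w‖ < 1 → DifferentiableOn ℂ (fun z => F (z, w)) (Metric.ball 0 1) := by
    intro w hw
    refine hd.comp (f := fun z : ℂ => (z, w)) (by fun_prop) ?_
    intro z hz
    exact hmem z w (by simpa using hz) hw
  have hs2 : ∀ z : ℂ, ‖z‖ < 1 → DifferentiableOn ℂ (fun w => F (z, w)) (Metric.ball 0 1) := by
    intro z hz
    refine hd.comp (f := fun w : ℂ => (z, w)) (by fun_prop) ?_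
    intro w hw
    exact hmem z w hz (by simpa using hw)
  -- Step 1: the slice w = 0
  obtain ⟨α, hα, h1⟩ : ∃ α : ℂ, ‖α‖ = 1 ∧ ∀ z : ℂ, ‖z‖ < 1 → F (z, 0) = α * z := by
    have hz0 : (1/2 : ℂ) ∈ Metric.ball (0 : ℂ) 1 := by simp; norm_num
    have hfc : F ((0 : ℂ), 0) = 0 := hF0
    have hnorm : ‖dslope (fun z => F (z, 0)) 0 (1/2 : ℂ)‖ = 1 := by
      rw [dslope_of_ne _ (by norm_num : (1/2 : ℂ) ≠ 0), slope_def_field, hfc, sub_zero, sub_zero,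
        norm_div, h]
      norm_num
    have := Complex.affine_of_mapsTo_ball_of_norm_dslope_eq_div (R₂ := 1) (hs1 0 (by simp))
      (by
        intro z hz
        have hz' : ‖z‖ < 1 := by simpa using hz
        have := hF _ (hmem z 0 hz' (by simp))
        simp [Prod.norm_def] at this
        simp only [hfc, mem_closedBall_zero_iff]
        exact this.trans hz'.le) hz0 (by rw [hnorm]; norm_num)
    refine ⟨_, hnorm, fun z hz => ?_⟩
    have h2 := this (show z ∈ Metric.ball (0:ℂ) 1 by simpa using hz)
    simp only [hfc, zero_add, sub_zero, smul_eq_mul] at h2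
    rw [h2, mul_comm]
  refine ⟨α, hα, ?_⟩
  -- Step 2: |w| < |z|
  have h2 : ∀ z w : ℂ, ‖z‖ < 1 → ‖w‖ < ‖z‖ → F (z, w) = α * z := by
    intro z w hz hw
    have := Complex.eqOn_of_isPreconnected_of_isMaxOn_norm (f := fun w => F (z, w)) (c := 0)
      (U := Metric.ball 0 ‖z‖) (convex_ball _ _).isPreconnected Metric.isOpen_ball
      ((hs2 z hz).mono (Metric.ball_subset_ball hz.le))
      (Metric.mem_ball_self ((norm_nonneg w).trans_lt hw))
      (by
        intro v hv
        have hv' : ‖v‖ < ‖z‖ := by simpa using hv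
        have := hF _ (hmem z v hz (hv'.trans hz))
        rw [Prod.norm_def, max_eq_left hv'.le] at this
        simp only [Set.mem_ofPred_eq, Function.comp, h1 z hz, norm_mul, hα, one_mul]
        exact this)
    have h3 := this (show w ∈ Metric.ball (0:ℂ) ‖z‖ by simpa using hw)
    simp only [Function.const, h1 z hz] at h3
    exact h3
  -- Step 3: identity theorem in z
  rintro ⟨z, w⟩ hp
  have hzw : ‖z‖ < 1 ∧ ‖w‖ < 1 := by simpa [Prod.norm_def] using hp
  obtain ⟨r, hr1, hr2⟩ := exists_between hzw.2
  have hr0 : 0 < r := (norm_nonneg w).trans_lt hr1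
  have hra : ((r : ℂ)) ∈ Metric.ball (0:ℂ) 1 := by
    simp [abs_of_pos hr0, hr2]
  have := ((hs1 w hzw.2).analyticOnNhd Metric.isOpen_ball).eqOn_of_preconnected_of_eventuallyEq
    (g := fun z => α * z)
    ((by fun_prop : DifferentiableOn ℂ (fun z => α * z) (Metric.ball 0 1)).analyticOnNhd
      Metric.isOpen_ball)
    (convex_ball _ _).isPreconnected hra (by
      have hopen : IsOpen {z : ℂ | ‖w‖ < ‖z‖ ∧ ‖z‖ < 1} :=
        (isOpen_lt continuous_const continuous_norm).inter
          (isOpen_lt continuous_norm continuous_const)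
      filter_upwards [hopen.mem_nhds (x := (r : ℂ)) (by simp [abs_of_pos hr0, hr1, hr2])] with v hv
      exact h2 v w hv.2 hv.1)
  exact this (show z ∈ Metric.ball (0:ℂ) 1 by simpa using hzw.1)

lemma ball_aut (f g : ℂ × ℂ → ℂ × ℂ)
    (hf : Set.MapsTo f (Metric.ball 0 1) (Metric.ball 0 1))
    (hg : Set.MapsTo g (Metric.ball 0 1) (Metric.ball 0 1))
    (hgf : ∀ p ∈ Metric.ball (0 : ℂ × ℂ) 1, g (f p) = p)
    (hdf : DifferentiableOn ℂ f (Metric.ball 0 1)) (hdg : DifferentiableOn ℂ g (Metric.ball 0 1))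
    (hf0 : f 0 = 0) :
    ∃ α β : ℂ, ‖α‖ = 1 ∧ ‖β‖ = 1 ∧
      ((∀ p ∈ Metric.ball (0 : ℂ × ℂ) 1, f p = (α * p.1, β * p.2)) ∨
       (∀ p ∈ Metric.ball (0 : ℂ × ℂ) 1, f p = (α * p.2, β * p.1))) := by
  have hg0 : g 0 = 0 := by simpa [hf0] using hgf 0 (by simp)
  have hn : ∀ p ∈ Metric.ball (0 : ℂ × ℂ) 1, ‖f p‖ = ‖p‖ := by
    intro p hp
    apply le_antisymm
    · exact Complex.norm_le_norm_of_mapsTo_ball hdf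
        (hf.mono_right Metric.ball_subset_closedBall) hf0 (by simpa using hp)
    · have := Complex.norm_le_norm_of_mapsTo_ball hdg
        (hg.mono_right Metric.ball_subset_closedBall) hg0 (z := f p) (by simpa using hf hp)
      rwa [hgf p hp] at this
  have hswap : ∀ p ∈ Metric.ball (0 : ℂ × ℂ) 1, p.swap ∈ Metric.ball (0 : ℂ × ℂ) 1 := by
    intro p hp
    simpa [Prod.norm_def, and_comm] using hp
  have hd1 : DifferentiableOn ℂ (fun p => (f p).1) (Metric.ball 0 1) := hdf.fst
  have hd2 : DifferentiableOn ℂ (fun p => (f p).2) (Metric.ball 0 1) := hdf.snd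
  have hsd : DifferentiableOn ℂ (fun p : ℂ × ℂ => p.swap) (Metric.ball 0 1) := by
    unfold Prod.swap; fun_prop
  have hd1' : DifferentiableOn ℂ (fun p : ℂ × ℂ => (f p.swap).1) (Metric.ball 0 1) :=
    hd1.comp hsd hswap
  have hd2' : DifferentiableOn ℂ (fun p : ℂ × ℂ => (f p.swap).2) (Metric.ball 0 1) :=
    hd2.comp hsd hswap
  have hsn : ∀ p : ℂ × ℂ, ‖p.swap‖ = ‖p‖ := by
    intro p; simp [Prod.norm_def, max_comm]
  have b1 : ∀ p ∈ Metric.ball (0 : ℂ × ℂ) 1, ‖(f p).1‖ ≤ ‖p‖ := fun p hp =>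
    (norm_fst_le _).trans (hn p hp).le
  have b2 : ∀ p ∈ Metric.ball (0 : ℂ × ℂ) 1, ‖(f p).2‖ ≤ ‖p‖ := fun p hp =>
    (norm_snd_le _).trans (hn p hp).le
  have b1' : ∀ p ∈ Metric.ball (0 : ℂ × ℂ) 1, ‖(f p.swap).1‖ ≤ ‖p‖ := fun p hp =>
    (b1 _ (hswap p hp)).trans (hsn p).le
  have b2' : ∀ p ∈ Metric.ball (0 : ℂ × ℂ) 1, ‖(f p.swap).2‖ ≤ ‖p‖ := fun p hp =>
    (b2 _ (hswap p hp)).trans (hsn p).le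
  have m1 : ((1/2 : ℂ), (0 : ℂ)) ∈ Metric.ball (0 : ℂ × ℂ) 1 := by
    simp [Prod.norm_def]; norm_num
  have m2 : ((0 : ℂ), (1/2 : ℂ)) ∈ Metric.ball (0 : ℂ × ℂ) 1 := by
    simp [Prod.norm_def]; norm_num
  have e1 : ‖(f (1/2, 0)).1‖ = 1/2 ∨ ‖(f (1/2, 0)).2‖ = 1/2 := by
    have := hn _ m1
    rw [Prod.norm_def, Prod.norm_def] at this
    rcases max_choice ‖(f (1/2, 0)).1‖ ‖(f (1/2, 0)).2‖ with h | h <;> rw [h] at this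
    · left; rw [this]; simp
    · right; rw [this]; simp
  have e2 : ‖(f (0, 1/2)).1‖ = 1/2 ∨ ‖(f (0, 1/2)).2‖ = 1/2 := by
    have := hn _ m2
    rw [Prod.norm_def, Prod.norm_def] at this
    rcases max_choice ‖(f (0, 1/2)).1‖ ‖(f (0, 1/2)).2‖ with h | h <;> rw [h] at this
    · left; rw [this]; simp
    · right; rw [this]; simp
  rcases e1 with e1 | e1 <;> rcases e2 with e2 | e2
  · obtain ⟨α, hα, h1⟩ := slice_lin _ hd1 b1 e1
    obtain ⟨β, hβ, h2⟩ := slice_lin _ hd1' b1' e2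
    exfalso
    have := h1 _ m1
    have h3 := h2 _ m2
    simp only [Prod.swap, mul_zero] at this h3
    rw [h3] at e1
    norm_num at e1
  · obtain ⟨α, hα, h1⟩ := slice_lin _ hd1 b1 e1
    obtain ⟨β, hβ, h2⟩ := slice_lin _ hd2' b2' e2
    refine ⟨α, β, hα, hβ, Or.inl fun p hp => Prod.ext (h1 p hp) ?_⟩
    simpa using h2 _ (hswap p hp)
  · obtain ⟨β, hβ, h1⟩ := slice_lin _ hd2 b2 e1
    obtain ⟨α, hα, h2⟩ := slice_lin _ hd1' b1' e2
    refine ⟨α, β, hα, hβ, Or.inr fun p hp => Prod.ext ?_ (h1 p hp)⟩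
    simpa using h2 _ (hswap p hp)
  · obtain ⟨α, hα, h1⟩ := slice_lin _ hd2 b2 e1
    obtain ⟨β, hβ, h2⟩ := slice_lin _ hd2' b2' e2
    exfalso
    have h3 := h2 _ m2
    simp only [Prod.swap, mul_zero] at h3
    rw [h3] at e1
    norm_num at e1

noncomputable def phiH (a w : ℂ) : ℂ := (w - a) / (w - (starRingEnd ℂ) a)
noncomputable def psiH (a u : ℂ) : ℂ := (a - (starRingEnd ℂ) a * u) / (1 - u)

lemma phiH_den {a w : ℂ} (ha : 0 < a.im) (hw : 0 < w.im) : w - (starRingEnd ℂ) a ≠ 0 := by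
  intro h
  have := congrArg Complex.im h
  simp at this
  linarith

lemma psiH_den {u : ℂ} (hu : ‖u‖ < 1) : 1 - u ≠ 0 := by
  intro h
  have : u = 1 := by linear_combination -h
  rw [this] at hu
  simp at hu

lemma conj_sub_ne {a : ℂ} (ha : 0 < a.im) : a - (starRingEnd ℂ) a ≠ 0 := phiH_den ha ha

lemma phiH_norm {a w : ℂ} (ha : 0 < a.im) (hw : 0 < w.im) : ‖phiH a w‖ < 1 := by
  unfold phiH
  rw [norm_div, div_lt_one (norm_pos_iff.2 (phiH_den ha hw))]
  rw [← sq_lt_sq₀ (norm_nonneg _) (norm_nonneg _), ← Complex.normSq_eq_norm_sq,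
    ← Complex.normSq_eq_norm_sq, Complex.normSq_apply, Complex.normSq_apply]
  simp
  nlinarith [mul_pos ha hw]

lemma psiH_im {a u : ℂ} (ha : 0 < a.im) (hu : ‖u‖ < 1) : 0 < (psiH a u).im := by
  have hd := psiH_den hu
  have hN : 0 < Complex.normSq (1 - u) := Complex.normSq_pos.2 hd
  have hu2 : Complex.normSq u < 1 := by
    rw [Complex.normSq_eq_norm_sq]
    nlinarith [norm_nonneg u]
  unfold psiH
  rw [Complex.div_im, ← sub_div]
  apply div_pos _ hN
  rw [Complex.normSq_apply] at hu2
  simp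
  nlinarith [mul_pos ha (sub_pos.2 hu2)]

lemma psi_phi {a w : ℂ} (ha : 0 < a.im) (hw : 0 < w.im) : psiH a (phiH a w) = w := by
  have h1 := phiH_den ha hw
  have h2 := psiH_den (phiH_norm ha hw)
  have h3 := conj_sub_ne ha
  unfold psiH
  rw [div_eq_iff h2]
  unfold phiH
  field_simp
  ring

lemma phi_psi {a u : ℂ} (ha : 0 < a.im) (hu : ‖u‖ < 1) : phiH a (psiH a u) = u := by
  have h1 := phiH_den ha (psiH_im ha hu)
  have h2 := psiH_den hu
  unfold phiH
  rw [div_eq_iff h1]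
  unfold psiH
  field_simp
  ring

lemma mob_exists {a α : ℂ} (ha : 0 < a.im) (hα : ‖α‖ = 1) :
    ∃ A B C D : ℝ, A * D - B * C = 1 ∧ ∀ w : ℂ, 0 < w.im →
      psiH a (α * phiH I w) = ((A : ℂ) * w + B) / ((C : ℂ) * w + D) := by
  obtain ⟨γ, hγ⟩ : ∃ γ : ℂ, γ ^ 2 = α := IsAlgClosed.exists_pow_nat_eq α (by norm_num)
  have hγ1 : ‖γ‖ = 1 := by
    have : ‖γ‖ ^ 2 = 1 := by rw [← norm_pow, hγ, hα]
    exact (pow_eq_one_iff_of_nonneg (norm_nonneg _) (by norm_num)).1 this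
  have hγ2 : γ.re * γ.re + γ.im * γ.im = 1 := by
    rw [← Complex.normSq_apply, Complex.normSq_eq_norm_sq, hγ1]; norm_num
  set s : ℝ := Real.sqrt a.im with hs
  have hs0 : 0 < s := Real.sqrt_pos.2 ha
  have hss : s * s = a.im := Real.mul_self_sqrt ha.le
  set c : ℂ := (starRingEnd ℂ) γ with hc
  have hγc : γ * c = 1 := by
    rw [hc, Complex.mul_conj, Complex.normSq_apply, hγ2]; norm_num
  refine ⟨(a * c).im / s, (a * c).re / s, -γ.im / s, γ.re / s, ?_, ?_⟩
  · have : (a * c).im * γ.re + (a * c).re * γ.im = a.im := by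
      simp [hc]
      linear_combination a.im * hγ2
    field_simp
    rw [sub_neg_eq_add, this, ← hss, sq]
  · intro w hw
    have hI : (0:ℝ) < I.im := by simp
    have hwi := phiH_den hI hw
    have hnorm : ‖α * phiH I w‖ < 1 := by
      rw [norm_mul, hα, one_mul]; exact phiH_norm hI hw
    have hden := psiH_den hnorm
    have e1 : ((a * c).im : ℂ) = (a * c - (starRingEnd ℂ) a * γ) / (2 * I) := by
      rw [Complex.im_eq_sub_conj]; simp [hc]
    have e2 : ((a * c).re : ℂ) = (a * c + (starRingEnd ℂ) a * γ) / 2 := by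
      rw [Complex.re_eq_add_conj]; simp [hc]
    have e3 : (γ.im : ℂ) = (γ - c) / (2 * I) := by
      rw [Complex.im_eq_sub_conj]
    have e4 : (γ.re : ℂ) = (γ + c) / 2 := by
      rw [Complex.re_eq_add_conj]
    have hsC : (s : ℂ) ≠ 0 := by exact_mod_cast hs0.ne'
    have hγ0 : γ ≠ 0 := left_ne_zero_of_mul_eq_one hγc
    have hc0 : c ≠ 0 := right_ne_zero_of_mul_eq_one hγc
    have hwi' : w + I ≠ 0 := by simpa using hwi
    have hD : psiH a (α * phiH I w) =
        (a * (w + I) - (starRingEnd ℂ) a * α * (w - I)) / ((w + I) - α * (w - I)) := by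
      unfold psiH
      have : (w + I) - α * (w - I) = (1 - α * phiH I w) * (w + I) := by
        unfold phiH
        simp only [conj_I, sub_neg_eq_add]
        field_simp
      rw [this, div_eq_div_iff hden (mul_ne_zero hden hwi')]
      unfold phiH
      simp only [conj_I, sub_neg_eq_add]
      field_simp
    rw [hD]
    push_cast
    rw [e1, e2, e3, e4]
    have hn : ((a * c - (starRingEnd ℂ) a * γ) / (2 * I) / s * w
        + (a * c + (starRingEnd ℂ) a * γ) / 2 / s)
        = (c / (2 * I * s)) * (a * (w + I) - (starRingEnd ℂ) a * α * (w - I)) := by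
      field_simp
      rw [← hγ]
      linear_combination ((starRingEnd ℂ) a * γ * w - (starRingEnd ℂ) a * γ * I) * hγc
    have hd : (-((γ - c) / (2 * I)) / s * w + (γ + c) / 2 / s)
        = (c / (2 * I * s)) * ((w + I) - α * (w - I)) := by
      field_simp
      rw [← hγ]
      linear_combination (γ * w - γ * I) * hγc
    rw [hn, hd, mul_div_mul_left]
    exact div_ne_zero hc0 (by simp [hsC])

def HH : Set (ℂ × ℂ) := {w | 0 < w.1.im ∧ 0 < w.2.im}

lemma phi_diff {a : ℂ} (ha : 0 < a.im) :
    DifferentiableOn ℂ (phiH a) {w | 0 < w.im} := by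
  unfold phiH
  exact (by fun_prop : DifferentiableOn ℂ (fun w : ℂ => w - a) _).div (by fun_prop)
    (fun w hw => phiH_den ha hw)

lemma psi_diff {a : ℂ} : DifferentiableOn ℂ (psiH a) (Metric.ball 0 1) := by
  unfold psiH
  exact (by fun_prop : DifferentiableOn ℂ (fun u : ℂ => a - (starRingEnd ℂ) a * u) _).div
    (by fun_prop) (fun w hw => psiH_den (by simpa using hw))

lemma ball_iff (p : ℂ × ℂ) : p ∈ Metric.ball (0 : ℂ × ℂ) 1 ↔ ‖p.1‖ < 1 ∧ ‖p.2‖ < 1 := by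
  simp [Prod.norm_def]

noncomputable def Phi (a : ℂ × ℂ) (w : ℂ × ℂ) : ℂ × ℂ := (phiH a.1 w.1, phiH a.2 w.2)
noncomputable def Psi (a : ℂ × ℂ) (w : ℂ × ℂ) : ℂ × ℂ := (psiH a.1 w.1, psiH a.2 w.2)

lemma Phi_maps {a : ℂ × ℂ} (ha : a ∈ HH) : Set.MapsTo (Phi a) HH (Metric.ball 0 1) :=
  fun _ hw => (ball_iff _).2 ⟨phiH_norm ha.1 hw.1, phiH_norm ha.2 hw.2⟩

lemma Psi_maps {a : ℂ × ℂ} (ha : a ∈ HH) : Set.MapsTo (Psi a) (Metric.ball 0 1) HH :=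
  fun _ hw => ⟨psiH_im ha.1 ((ball_iff _).1 hw).1, psiH_im ha.2 ((ball_iff _).1 hw).2⟩

lemma Psi_Phi {a w : ℂ × ℂ} (ha : a ∈ HH) (hw : w ∈ HH) : Psi a (Phi a w) = w :=
  Prod.ext (psi_phi ha.1 hw.1) (psi_phi ha.2 hw.2)

lemma Phi_Psi {a w : ℂ × ℂ} (ha : a ∈ HH) (hw : w ∈ Metric.ball (0 : ℂ × ℂ) 1) :
    Phi a (Psi a w) = w :=
  Prod.ext (phi_psi ha.1 ((ball_iff _).1 hw).1) (phi_psi ha.2 ((ball_iff _).1 hw).2)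

lemma Phi_diff {a : ℂ × ℂ} (ha : a ∈ HH) : DifferentiableOn ℂ (Phi a) HH :=
  ((phi_diff ha.1).comp differentiableOn_fst (fun _ hw => hw.1)).prodMk
    ((phi_diff ha.2).comp differentiableOn_snd (fun _ hw => hw.2))

lemma Psi_diff {a : ℂ × ℂ} : DifferentiableOn ℂ (Psi a) (Metric.ball 0 1) :=
  (psi_diff.comp differentiableOn_fst
      (fun _ hw => by simpa using ((ball_iff _).1 hw).1)).prodMk
    (psi_diff.comp differentiableOn_snd (fun _ hw => by simpa using ((ball_iff _).1 hw).2))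

lemma HH_aut (f g : ℂ × ℂ → ℂ × ℂ)
    (hf : Set.MapsTo f HH HH) (hg : Set.MapsTo g HH HH)
    (hgf : ∀ p ∈ HH, g (f p) = p)
    (hdf : DifferentiableOn ℂ f HH) (hdg : DifferentiableOn ℂ g HH) :
    ∃ a1 b1 c1 d1 a2 b2 c2 d2 : ℝ, a1 * d1 - b1 * c1 = 1 ∧ a2 * d2 - b2 * c2 = 1 ∧
      ((∀ w ∈ HH, f w = (((a1 : ℂ) * w.1 + b1) / ((c1 : ℂ) * w.1 + d1),
          ((a2 : ℂ) * w.2 + b2) / ((c2 : ℂ) * w.2 + d2))) ∨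
       (∀ w ∈ HH, f w = (((a2 : ℂ) * w.2 + b2) / ((c2 : ℂ) * w.2 + d2),
          ((a1 : ℂ) * w.1 + b1) / ((c1 : ℂ) * w.1 + d1)))) := by
  have hi : ((I, I) : ℂ × ℂ) ∈ HH := by simp [HH]
  set a := f (I, I) with ha_def
  have ha : a ∈ HH := hf hi
  have hP0 : Psi (I, I) 0 = (I, I) := by simp [Psi, psiH]
  have hQ0 : Phi a a = 0 := by simp [Phi, phiH]
  obtain ⟨α, β, hα, hβ, h⟩ := ball_aut (Phi a ∘ f ∘ Psi (I, I)) (Phi (I, I) ∘ g ∘ Psi a)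
    ((Phi_maps ha).comp (hf.comp (Psi_maps hi)))
    ((Phi_maps hi).comp (hg.comp (Psi_maps ha)))
    (by
      intro p hp
      have h1 := Psi_maps hi hp
      simp only [Function.comp]
      rw [Psi_Phi ha (hf h1), hgf _ h1, Phi_Psi hi hp])
    ((Phi_diff ha).comp (hdf.comp Psi_diff (Psi_maps hi)) (hf.comp (Psi_maps hi)))
    ((Phi_diff hi).comp (hdg.comp Psi_diff (Psi_maps ha)) (hg.comp (Psi_maps ha)))
    (by simp only [Function.comp, hP0]; exact hQ0)
  have key : ∀ w ∈ HH, f w = Psi a ((Phi a ∘ f ∘ Psi (I, I)) (Phi (I, I) w)) := by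
    intro w hw
    simp only [Function.comp]
    rw [Psi_Phi hi hw, Psi_Phi ha (hf hw)]
  rcases h with h | h
  · obtain ⟨a1, b1, c1, d1, hdet1, h1⟩ := mob_exists ha.1 hα
    obtain ⟨a2, b2, c2, d2, hdet2, h2⟩ := mob_exists ha.2 hβ
    refine ⟨a1, b1, c1, d1, a2, b2, c2, d2, hdet1, hdet2, Or.inl fun w hw => ?_⟩
    rw [key w hw, h _ (Phi_maps hi hw), ← h1 _ hw.1, ← h2 _ hw.2]
    rfl
  · obtain ⟨a1, b1, c1, d1, hdet1, h1⟩ := mob_exists ha.2 hβ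
    obtain ⟨a2, b2, c2, d2, hdet2, h2⟩ := mob_exists ha.1 hα
    refine ⟨a1, b1, c1, d1, a2, b2, c2, d2, hdet1, hdet2, Or.inr fun w hw => ?_⟩
    rw [key w hw, h _ (Phi_maps hi hw), ← h1 _ hw.1, ← h2 _ hw.2]
    rfl

def bsR (x y : ℝ) : Mat2R := !![(x+y)/2, (x-y)/2; (x-y)/2, (x+y)/2]
def bsC (x y : ℂ) : Mat2 := !![(x+y)/2, (x-y)/2; (x-y)/2, (x+y)/2]

lemma bsR_map (x y : ℝ) : (bsR x y).map Complex.ofReal = bsC x y := by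
  ext i j; fin_cases i <;> fin_cases j <;> simp [bsR, bsC]

lemma bsC_mul (x y x' y' : ℂ) : bsC x y * bsC x' y' = bsC (x * x') (y * y') := by
  ext i j; fin_cases i <;> fin_cases j <;> simp [bsC, Matrix.mul_apply] <;> ring

lemma bsC_add (x y x' y' : ℂ) : bsC x y + bsC x' y' = bsC (x + x') (y + y') := by
  ext i j; fin_cases i <;> fin_cases j <;> simp [bsC] <;> ring

lemma bsC_one : bsC 1 1 = 1 := by
  ext i j; fin_cases i <;> fin_cases j <;> simp [bsC]

lemma bsC_inv {x y : ℂ} (hx : x ≠ 0) (hy : y ≠ 0) : (bsC x y)⁻¹ = bsC x⁻¹ y⁻¹ := by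
  apply Matrix.inv_eq_right_inv
  rw [bsC_mul, mul_inv_cancel₀ hx, mul_inv_cancel₀ hy, bsC_one]

lemma bsC_mem {x y : ℂ} : bsC x y ∈ Hhat ↔ 0 < x.im ∧ 0 < y.im := by
  have e1 : ((x - y) / 2).im = (x.im - y.im) / 2 := by simp
  have e2 : ((x + y) / 2).im = (x.im + y.im) / 2 := by simp
  simp only [Hhat, Set.mem_ofPred_eq, bsC, Matrix.of_apply, Matrix.cons_val', Matrix.cons_val_zero,
    Matrix.cons_val_one, Matrix.cons_val_fin_one, true_and, e1, e2, abs_lt]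
  constructor
  · rintro ⟨h1, h2⟩; constructor <;> linarith
  · rintro ⟨h1, h2⟩; constructor <;> linarith

lemma Hhat_eq {Z : Mat2} (hZ : Z ∈ Hhat) : Z = bsC (Z 0 0 + Z 0 1) (Z 0 0 - Z 0 1) := by
  obtain ⟨h1, h2, -⟩ := hZ
  ext i j; fin_cases i <;> fin_cases j <;> simp [bsC, h1, h2]

lemma mob_den {c d : ℝ} {w : ℂ} (hw : 0 < w.im) (h : c ≠ 0 ∨ d ≠ 0) : (c : ℂ) * w + d ≠ 0 := by
  intro h0
  have h1 := congrArg Complex.im h0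
  have h2 := congrArg Complex.re h0
  simp at h1 h2
  have hc : c = 0 := h1.resolve_right hw.ne'
  subst hc
  simp at h2 h
  exact h h2

lemma mob_im {a b c d : ℝ} {w : ℂ} (hw : 0 < w.im) (h : a * d - b * c = 1) :
    0 < (((a : ℂ) * w + b) / ((c : ℂ) * w + d)).im := by
  have hd : (c : ℂ) * w + d ≠ 0 := mob_den hw (by
    by_contra! hh
    rw [hh.1, hh.2] at h; simp at h)
  rw [Complex.div_im, ← sub_div]
  apply div_pos _ (Complex.normSq_pos.2 hd)
  simp
  nlinarith [congrArg (fun t => t * w.im) h]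

def Mdiag (a1 b1 c1 d1 a2 b2 c2 d2 : ℝ) : Mat4 :=
  Matrix.fromBlocks (bsR a1 a2) (bsR b1 b2) (bsR c1 c2) (bsR d1 d2)

lemma act_Mdiag {a1 b1 c1 d1 a2 b2 c2 d2 : ℝ} (h1 : a1 * d1 - b1 * c1 = 1)
    (h2 : a2 * d2 - b2 * c2 = 1) {x y : ℂ} (hx : 0 < x.im) (hy : 0 < y.im) :
    act (Mdiag a1 b1 c1 d1 a2 b2 c2 d2) (bsC x y) =
      bsC (((a1 : ℂ) * x + b1) / ((c1 : ℂ) * x + d1)) (((a2 : ℂ) * y + b2) / ((c2 : ℂ) * y + d2)) := by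
  have hd1 : (c1 : ℂ) * x + d1 ≠ 0 := mob_den hx (by
    by_contra! hh
    rw [hh.1, hh.2] at h1; simp at h1)
  have hd2 : (c2 : ℂ) * y + d2 ≠ 0 := mob_den hy (by
    by_contra! hh
    rw [hh.1, hh.2] at h2; simp at h2)
  simp only [act, Mdiag, Matrix.toBlocks_fromBlocks₁₁, Matrix.toBlocks_fromBlocks₁₂,
    Matrix.toBlocks_fromBlocks₂₁, Matrix.toBlocks_fromBlocks₂₂, bsR_map, bsC_mul, bsC_add]
  rw [bsC_inv hd1 hd2, bsC_mul]
  rfl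

lemma Mdiag_mem {a1 b1 c1 d1 a2 b2 c2 d2 : ℝ} (h1 : a1 * d1 - b1 * c1 = 1)
    (h2 : a2 * d2 - b2 * c2 = 1) : Mdiag a1 b1 c1 d1 a2 b2 c2 d2 ∈ OmegaHat := by
  constructor
  · show _ = _
    simp only [Mdiag, Jmat, Matrix.fromBlocks_transpose, Matrix.fromBlocks_multiply]
    congr 1 <;> ext i j <;> fin_cases i <;> fin_cases j <;>
      simp [bsR, Matrix.mul_apply] <;>
      first
      | ring1
      | linear_combination (h1 + h2) / 2
      | linear_combination (-1 / 2 : ℝ) * h1 + (-1 / 2 : ℝ) * h2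
      | linear_combination (h1 - h2) / 2
      | linear_combination (-1 / 2 : ℝ) * h1 + (1 / 2 : ℝ) * h2
  · intro Z hZ
    have hZ' := hZ
    rw [Hhat_eq hZ] at hZ' ⊢
    rw [bsC_mem] at hZ'
    rw [act_Mdiag h1 h2 hZ'.1 hZ'.2, bsC_mem]
    exact ⟨mob_im hZ'.1 h1, mob_im hZ'.2 h2⟩

lemma act_dd (T : Mat2R) (M : Mat4) (Z : Mat2) :
    act (Matrix.fromBlocks T 0 0 T * M) Z =
      T.map Complex.ofReal * act M Z * (T.map Complex.ofReal)⁻¹ := by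
  have hb := Matrix.fromBlocks_toBlocks M
  set A := M.toBlocks₁₁
  set B := M.toBlocks₁₂
  set C := M.toBlocks₂₁
  set D := M.toBlocks₂₂
  have hm : ∀ X Y : Mat2R, (X * Y).map Complex.ofReal = X.map Complex.ofReal * Y.map Complex.ofReal :=
    fun X Y => Matrix.map_mul (f := Complex.ofRealHom)
  rw [← hb, Matrix.fromBlocks_multiply]
  simp only [act, Matrix.toBlocks_fromBlocks₁₁, Matrix.toBlocks_fromBlocks₁₂,
    Matrix.toBlocks_fromBlocks₂₁, Matrix.toBlocks_fromBlocks₂₂, zero_mul, add_zero, zero_add, hm]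
  rw [Matrix.mul_assoc, ← Matrix.mul_add, Matrix.mul_assoc (T.map Complex.ofReal) _ Z,
    ← Matrix.mul_add, Matrix.mul_inv_rev]
  simp only [Matrix.mul_assoc]

def sR : Mat2R := !![1, 0; 0, -1]

lemma s_conj (x y : ℂ) :
    sR.map Complex.ofReal * bsC x y * (sR.map Complex.ofReal)⁻¹ = bsC y x := by
  have hs : (sR.map Complex.ofReal)⁻¹ = sR.map Complex.ofReal := by
    apply Matrix.inv_eq_right_inv
    ext i j; fin_cases i <;> fin_cases j <;> simp [sR, Matrix.mul_apply]
  rw [hs]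
  ext i j; fin_cases i <;> fin_cases j <;> simp [sR, bsC, Matrix.mul_apply] <;> ring

lemma swap_mem {M : Mat4} (hM : M ∈ OmegaHat) : Matrix.fromBlocks sR 0 0 sR * M ∈ OmegaHat := by
  constructor
  · have h := hM.1
    change _ = _ at h
    show _ = _
    have : (Matrix.fromBlocks sR 0 0 sR)ᵀ * Jmat * Matrix.fromBlocks sR 0 0 sR = Jmat := by
      simp only [Jmat, Matrix.fromBlocks_transpose, Matrix.fromBlocks_multiply]
      congr 1 <;> ext i j <;> fin_cases i <;> fin_cases j <;> simp [sR, Matrix.mul_apply]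
    rw [Matrix.transpose_mul]
    calc _ = Mᵀ * ((Matrix.fromBlocks sR 0 0 sR)ᵀ * Jmat * Matrix.fromBlocks sR 0 0 sR) * M := by
          simp only [Matrix.mul_assoc]
      _ = _ := by rw [this, h]
  · intro Z hZ
    have h := hM.2 Z hZ
    rw [act_dd, Hhat_eq h, s_conj]
    rw [Hhat_eq h, bsC_mem] at h
    exact bsC_mem.2 h.symm

lemma part1 (f g : ℂ × ℂ → ℂ × ℂ)
    (hf : Set.MapsTo f HhatP HhatP) (hg : Set.MapsTo g HhatP HhatP)
    (hgf : ∀ p ∈ HhatP, g (f p) = p)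
    (hdf : DifferentiableOn ℂ f HhatP) (hdg : DifferentiableOn ℂ g HhatP) :
    ∃ M ∈ OmegaHat, ∀ p ∈ HhatP,
        f p = (act M (mk2 p) 0 0, act M (mk2 p) 0 1) := by
  let toW : ℂ × ℂ → ℂ × ℂ := fun p => (p.1 + p.2, p.1 - p.2)
  let ofW : ℂ × ℂ → ℂ × ℂ := fun w => ((w.1 + w.2) / 2, (w.1 - w.2) / 2)
  have h1 : ∀ p, ofW (toW p) = p := fun p => by ext <;> simp [ofW, toW]
  have h2 : ∀ p, toW (ofW p) = p := fun p => by ext <;> simp [ofW, toW] <;> ring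
  have hmk : ∀ p, mk2 p = bsC (toW p).1 (toW p).2 := fun p => by
    ext i j; fin_cases i <;> fin_cases j <;> simp [mk2, bsC, toW]
  have hmem : ∀ p, p ∈ HhatP ↔ toW p ∈ HH := fun p => by
    show mk2 p ∈ Hhat ↔ _
    rw [hmk, bsC_mem]; rfl
  have hto : Set.MapsTo toW HhatP HH := fun p hp => (hmem p).1 hp
  have hof : Set.MapsTo ofW HH HhatP := fun p hp => (hmem _).2 (by rwa [h2])
  have dto : Differentiable ℂ toW := by fun_prop
  have dof : Differentiable ℂ ofW := by fun_prop
  have hW : ∀ {u v : ℂ} {p}, toW p = (u, v) → p = (bsC u v 0 0, bsC u v 0 1) := by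
    intro u v p h
    rw [← h1 p, h]
    simp [ofW, bsC]
  obtain ⟨a1, b1, c1, d1, a2, b2, c2, d2, e1, e2, h⟩ := HH_aut (toW ∘ f ∘ ofW) (toW ∘ g ∘ ofW)
    (hto.comp (hf.comp hof)) (hto.comp (hg.comp hof))
    (by intro p hp
        simp only [Function.comp]
        rw [h1, hgf _ (hof hp), h2])
    (dto.comp_differentiableOn (hdf.comp dof.differentiableOn hof))
    (dto.comp_differentiableOn (hdg.comp dof.differentiableOn hof))
  rcases h with h | h
  · refine ⟨_, Mdiag_mem e1 e2, fun p hp => ?_⟩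
    have hp' := hto hp
    have := h _ hp'
    simp only [Function.comp, h1] at this
    rw [hmk, act_Mdiag e1 e2 hp'.1 hp'.2]
    exact hW this
  · refine ⟨_, swap_mem (Mdiag_mem e1 e2), fun p hp => ?_⟩
    have hp' := hto hp
    have := h _ hp'
    simp only [Function.comp, h1] at this
    rw [hmk, act_dd, act_Mdiag e1 e2 hp'.1 hp'.2, s_conj]
    exact hW this

def cR (M : Mat4) : Matrix (Fin 2 ⊕ Fin 2) (Fin 2 ⊕ Fin 2) ℂ := M.map Complex.ofReal

lemma cR_mul (M N : Mat4) : cR (M * N) = cR M * cR N := Matrix.map_mul (f := Complex.ofRealHom)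

lemma cR_one : cR 1 = 1 := by simp [cR]

def colZ (Z : Mat2) : Matrix (Fin 2 ⊕ Fin 2) (Fin 2) ℂ := Matrix.fromRows Z 1

lemma cR_col (M : Mat4) (Z : Mat2) : cR M * colZ Z =
    Matrix.fromRows (M.toBlocks₁₁.map Complex.ofReal * Z + M.toBlocks₁₂.map Complex.ofReal)
      (M.toBlocks₂₁.map Complex.ofReal * Z + M.toBlocks₂₂.map Complex.ofReal) := by
  conv_lhs => rw [← Matrix.fromBlocks_toBlocks M]
  rw [cR, Matrix.fromBlocks_map, colZ, Matrix.fromBlocks_mul_fromRows, Matrix.mul_one,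
    Matrix.mul_one]

lemma rel {M : Mat4} {Z : Mat2} (h : act M Z ∈ Hhat) :
    ∃ Y Y' : Mat2, Y * Y' = 1 ∧ cR M * colZ Z = colZ (act M Z) * Y := by
  set Y := M.toBlocks₂₁.map Complex.ofReal * Z + M.toBlocks₂₂.map Complex.ofReal with hY
  have hu : IsUnit Y.det := by
    by_contra hn
    have h0 : act M Z = 0 := by
      unfold act
      rw [← hY, Matrix.nonsing_inv_apply_not_isUnit _ hn, mul_zero]
    rw [h0] at h
    simp [Hhat] at h
  refine ⟨Y, Y⁻¹, Matrix.mul_nonsing_inv _ hu, ?_⟩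
  rw [cR_col, colZ, Matrix.fromRows_mul, one_mul, ← hY]
  congr 1
  unfold act
  rw [← hY, Matrix.mul_assoc, Matrix.nonsing_inv_mul _ hu, mul_one]

lemma JJ : Jmat * Jmat = -1 := by
  simp only [Jmat, Matrix.fromBlocks_multiply]
  rw [← Matrix.fromBlocks_one, Matrix.fromBlocks_neg]
  simp

lemma left_inv {M : Mat4} (h : M ∈ Omega2) : (-(Jmat * Mᵀ * Jmat)) * M = 1 := by
  change _ = _ at h
  calc _ = -(Jmat * (Mᵀ * Jmat * M)) := by simp only [Matrix.mul_assoc, Matrix.neg_mul]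
    _ = 1 := by rw [h, JJ, neg_neg]

lemma fixed {N : Mat4} (hN : N ∈ Omega2)
    (h : ∀ Z ∈ Hhat, ∃ K : Mat2, cR N * colZ Z = colZ Z * K) :
    N = 1 ∨ N = -1 ∨ N = Qmat ∨ N = -Qmat := by
  have hb := Matrix.fromBlocks_toBlocks N
  have h' : ∀ Z ∈ Hhat, N.toBlocks₁₁.map Complex.ofReal * Z + N.toBlocks₁₂.map Complex.ofReal =
      Z * (N.toBlocks₂₁.map Complex.ofReal * Z + N.toBlocks₂₂.map Complex.ofReal) := by
    intro Z hZ
    obtain ⟨K, hK⟩ := h Z hZ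
    rw [cR_col, colZ, Matrix.fromRows_mul, one_mul] at hK
    obtain ⟨k1, k2⟩ := Matrix.fromRows_inj.eq_iff.1 hK
    rw [k1, k2]
  generalize N.toBlocks₁₁ = A at *
  generalize N.toBlocks₁₂ = B at *
  generalize N.toBlocks₂₁ = C at *
  generalize N.toBlocks₂₂ = D at *
  subst hb
  have z1 := h' !![I, 0; 0, I] (by simp [Hhat])
  have z2 := h' !![2 * I, 0; 0, 2 * I] (by simp [Hhat])
  have z3 := h' !![2 * I, I; I, 2 * I] (by simp [Hhat])
  have hC : C = 0 := by
    ext i j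
    have y1 := congrArg Complex.re (congrFun (congrFun z1 i) j)
    have y2 := congrArg Complex.re (congrFun (congrFun z2 i) j)
    fin_cases i <;> fin_cases j <;> simp [Matrix.mul_apply] at y1 y2 ⊢ <;> linarith
  have hB : B = 0 := by
    ext i j
    have y1 := congrArg Complex.re (congrFun (congrFun z1 i) j)
    have y2 := congrArg Complex.re (congrFun (congrFun z2 i) j)
    fin_cases i <;> fin_cases j <;> simp [Matrix.mul_apply] at y1 y2 ⊢ <;> linarith
  have hD : D = A := by
    ext i j
    have y1 := congrArg Complex.im (congrFun (congrFun z1 i) j)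
    fin_cases i <;> fin_cases j <;> simp [Matrix.mul_apply] at y1 ⊢ <;> linarith
  subst hC hB hD
  have q1 : D 1 1 = D 0 0 := by
    have y1 := congrArg Complex.im (congrFun (congrFun z3 0) 1)
    simp [Matrix.mul_apply] at y1
    linarith
  have q2 : D 1 0 = D 0 1 := by
    have y1 := congrArg Complex.im (congrFun (congrFun z3 0) 0)
    simp [Matrix.mul_apply] at y1
    linarith
  change _ = _ at hN
  simp only [Jmat, Matrix.fromBlocks_transpose, Matrix.fromBlocks_multiply] at hN
  have hN2 := (Matrix.fromBlocks_inj.1 hN).2.1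
  have r1 := congrFun (congrFun hN2 0) 0
  have r2 := congrFun (congrFun hN2 0) 1
  simp [Matrix.mul_apply, q1, q2] at r1 r2
  have hDD : D = !![D 0 0, D 0 1; D 0 1, D 0 0] := by
    ext i j; fin_cases i <;> fin_cases j <;> simp [q1, q2]
  have hr : D 0 0 * D 0 1 = 0 := by
    rcases mul_eq_zero.1 (show D 0 0 * D 0 1 = 0 by grind) with h | h <;> simp [h]
  rcases mul_eq_zero.1 hr with h | h
  · rw [h] at r1
    have : D 0 1 = 1 ∨ D 0 1 = -1 := by
      apply mul_self_eq_one_iff.1; linarith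
    rcases this with h2 | h2
    · right; right; left
      rw [hDD, h, h2]; rfl
    · right; right; right
      rw [hDD, h, h2, Qmat, Matrix.fromBlocks_neg]
      congr 1 <;> ext i j <;> fin_cases i <;> fin_cases j <;> simp [qR]
  · rw [h] at r1
    have : D 0 0 = 1 ∨ D 0 0 = -1 := by
      apply mul_self_eq_one_iff.1; linarith
    rcases this with h2 | h2
    · left
      rw [hDD, h, h2, ← Matrix.fromBlocks_one]
      congr 1 <;> ext i j <;> fin_cases i <;> fin_cases j <;> simp
    · right; left
      rw [hDD, h, h2, ← Matrix.fromBlocks_one, Matrix.fromBlocks_neg]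
      congr 1 <;> ext i j <;> fin_cases i <;> fin_cases j <;> simp

lemma core {M M' : Mat4} (hM : M ∈ OmegaHat) (hM' : M' ∈ Omega2)
    (h : ∀ Z ∈ Hhat, act M' Z = act M Z) :
    M' = M ∨ M' = -M ∨ M' = M * Qmat ∨ M' = -(M * Qmat) := by
  set L : Mat4 := -(Jmat * Mᵀ * Jmat) with hL
  have hLM : L * M = 1 := left_inv hM.1
  have hML : M * L = 1 := mul_eq_one_comm.1 hLM
  have hMN : M * (L * M') = M' := by rw [← Matrix.mul_assoc, hML, one_mul]
  have hN : L * M' ∈ Omega2 := by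
    have h1 : Mᵀ * Jmat * M = Jmat := hM.1
    have h2 : M'ᵀ * Jmat * M' = Jmat := hM'
    show (L * M')ᵀ * Jmat * (L * M') = Jmat
    calc _ = (L * M')ᵀ * (Mᵀ * Jmat * M) * (L * M') := by rw [h1]
      _ = (M * (L * M'))ᵀ * Jmat * (M * (L * M')) := by
        rw [Matrix.transpose_mul M]; simp only [Matrix.mul_assoc]
      _ = _ := by rw [hMN, h2]
  have := fixed hN (by
    intro Z hZ
    obtain ⟨Y, Yi, hY, e⟩ := rel (hM.2 Z hZ)
    obtain ⟨Y', Yi', hY', e'⟩ := rel (M := M') (Z := Z) (by rw [h Z hZ]; exact hM.2 Z hZ)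
    refine ⟨Yi * Y', ?_⟩
    rw [h Z hZ] at e'
    have e2 : colZ (act M Z) = cR M * colZ Z * Yi := by
      rw [e, Matrix.mul_assoc, hY, Matrix.mul_one]
    rw [cR_mul, Matrix.mul_assoc, e', e2]
    calc _ = (cR L * cR M) * colZ Z * (Yi * Y') := by simp only [Matrix.mul_assoc]
      _ = _ := by rw [← cR_mul, hLM, cR_one, Matrix.one_mul])
  rw [← hMN]
  rcases this with h | h | h | h <;> rw [h] <;> simp

lemma QQ : Qmat * Qmat = 1 := by
  rw [Qmat, Matrix.fromBlocks_multiply, ← Matrix.fromBlocks_one]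
  congr 1 <;> ext i j <;> fin_cases i <;> fin_cases j <;> simp [qR, Matrix.mul_apply]

lemma Q_mem : Qmatᵀ * Jmat * Qmat = Jmat := by
  simp only [Jmat, Qmat, Matrix.fromBlocks_transpose, Matrix.fromBlocks_multiply]
  congr 1 <;> ext i j <;> fin_cases i <;> fin_cases j <;> simp [qR, Matrix.mul_apply]

lemma Omega2_mul {M N : Mat4} (hM : M ∈ Omega2) (hN : N ∈ Omega2) : M * N ∈ Omega2 := by
  change _ = _ at hM hN
  show _ = _
  calc _ = Nᵀ * (Mᵀ * Jmat * M) * N := by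
        rw [Matrix.transpose_mul]; simp only [Matrix.mul_assoc]
    _ = _ := by rw [hM, hN]

lemma q_sq : qR.map Complex.ofReal * qR.map Complex.ofReal = 1 := by
  ext i j; fin_cases i <;> fin_cases j <;> simp [qR, Matrix.mul_apply]

lemma q_inv : (qR.map Complex.ofReal)⁻¹ = qR.map Complex.ofReal := Matrix.inv_eq_right_inv q_sq

lemma q_comm {Z : Mat2} (hZ : Z ∈ Hhat) : qR.map Complex.ofReal * Z = Z * qR.map Complex.ofReal := by
  obtain ⟨h1, h2, -⟩ := hZ
  ext i j; fin_cases i <;> fin_cases j <;> simp [qR, Matrix.mul_apply, h1, h2]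

lemma act_Q_left {M : Mat4} {Z : Mat2} (h : act M Z ∈ Hhat) : act (Qmat * M) Z = act M Z := by
  rw [Qmat, act_dd, q_comm h, q_inv, Matrix.mul_assoc, q_sq, mul_one]

lemma act_Q_right {M : Mat4} {Z : Mat2} (hZ : Z ∈ Hhat) : act (M * Qmat) Z = act M Z := by
  have hb := Matrix.fromBlocks_toBlocks M
  set A := M.toBlocks₁₁
  set B := M.toBlocks₁₂
  set C := M.toBlocks₂₁
  set D := M.toBlocks₂₂
  have hm : ∀ X Y : Mat2R, (X * Y).map Complex.ofReal = X.map Complex.ofReal * Y.map Complex.ofReal :=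
    fun X Y => Matrix.map_mul (f := Complex.ofRealHom)
  rw [← hb, Qmat, Matrix.fromBlocks_multiply]
  simp only [act, Matrix.toBlocks_fromBlocks₁₁, Matrix.toBlocks_fromBlocks₁₂,
    Matrix.toBlocks_fromBlocks₂₁, Matrix.toBlocks_fromBlocks₂₂, mul_zero, add_zero, zero_add, hm]
  rw [Matrix.mul_assoc _ _ Z, Matrix.mul_assoc _ _ Z, q_comm hZ, ← Matrix.mul_assoc,
    ← Matrix.mul_assoc, ← Matrix.add_mul, ← Matrix.add_mul, Matrix.mul_inv_rev, q_inv,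
    Matrix.mul_assoc, ← Matrix.mul_assoc (qR.map Complex.ofReal), q_sq, one_mul]

lemma act_neg (M : Mat4) (Z : Mat2) : act (-M) Z = act M Z := by
  have := act_dd (-1) M Z
  have e : Matrix.fromBlocks (-1 : Mat2R) 0 0 (-1) = (-1 : Mat4) := by
    rw [← Matrix.fromBlocks_one, Matrix.fromBlocks_neg]; simp
  have e2 : (-1 : Mat2R).map Complex.ofReal = -1 := by
    ext i j; fin_cases i <;> fin_cases j <;> simp
  have e3 : (-1 : Mat2)⁻¹ = -1 := Matrix.inv_eq_right_inv (by simp)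
  rw [e, e2, e3] at this
  simpa using this

lemma Q_comm {M : Mat4} (hM : M ∈ OmegaHat) : M * Qmat = Qmat * M ∨ M * Qmat = -(Qmat * M) := by
  have hLM := left_inv hM.1
  have hML := mul_eq_one_comm.1 hLM
  have := core hM (M' := Qmat * (M * Qmat)) (Omega2_mul Q_mem (Omega2_mul hM.1 Q_mem)) (by
    intro Z hZ
    have h := hM.2 Z hZ
    rw [← act_Q_right hZ] at h
    rw [act_Q_left h, act_Q_right hZ])
  have hx : ∀ X : Mat4, Qmat * (M * Qmat) = X → M * Qmat = Qmat * X := by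
    intro X h
    rw [← h, ← Matrix.mul_assoc Qmat Qmat, QQ, Matrix.one_mul]
  have hy : ∀ X : Mat4, Qmat * (M * Qmat) = X * (M * Qmat) → Qmat = X := by
    intro X h
    have h2 : ∀ T : Mat4, T * (M * Qmat) * (Qmat * -(Jmat * Mᵀ * Jmat)) = T := by
      intro T
      calc _ = T * (M * (Qmat * Qmat) * -(Jmat * Mᵀ * Jmat)) := by simp only [Matrix.mul_assoc]
        _ = T := by rw [QQ, Matrix.mul_one, hML, Matrix.mul_one]
    rw [← h2 Qmat, h, h2]
  rcases this with h | h | h | h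
  · exact Or.inl (hx _ h)
  · right; rw [hx _ h, Matrix.mul_neg]
  · exfalso
    have := congrFun (congrFun (hy 1 (by rw [h, Matrix.one_mul])) (Sum.inl 0)) (Sum.inl 0)
    simp [Qmat, qR] at this
  · exfalso
    have := congrFun (congrFun (hy (-1) (by rw [h, Matrix.neg_mul, Matrix.one_mul])) (Sum.inl 0)) (Sum.inl 0)
    simp [Qmat, qR] at this

/-- every biholomorphic self-map of `Ĥ₂` is `Z ↦ M<Z>` for some
`M ∈ Ω̂₂`, and `M, M′ ∈ Ω̂₂` induce the same map iff `M′ ∈ {±M, ±QM}` (so the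
group of biholomorphic self-maps of `Ĥ₂` is `Ω̂₂/{±I, ±Q}`). -/
theorem stmt_7 :
    (∀ f g : ℂ × ℂ → ℂ × ℂ,
      Set.MapsTo f HhatP HhatP → Set.MapsTo g HhatP HhatP →
      (∀ p ∈ HhatP, g (f p) = p) → (∀ p ∈ HhatP, f (g p) = p) →
      DifferentiableOn ℂ f HhatP → DifferentiableOn ℂ g HhatP →
      ∃ M ∈ OmegaHat, ∀ p ∈ HhatP,
        f p = (act M (mk2 p) 0 0, act M (mk2 p) 0 1)) ∧
    (∀ M ∈ OmegaHat, ∀ M' ∈ OmegaHat,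
      ((∀ Z ∈ Hhat, act M' Z = act M Z) ↔
        (M' = M ∨ M' = -M ∨ M' = Qmat * M ∨ M' = -(Qmat * M)))) := by
  refine ⟨fun f g hf hg hgf _ hdf hdg => part1 f g hf hg hgf hdf hdg, ?_⟩
  intro M hM M' hM'
  constructor
  · intro h
    have h1 := core hM hM'.1 h
    rcases Q_comm hM with hc | hc <;> rw [hc] at h1
    · exact h1
    · rw [neg_neg] at h1
      tauto
  · rintro (h | h | h | h) Z hZ <;> subst h
    · rfl
    · exact act_neg M Z
    · exact act_Q_left (hM.2 Z hZ)
    · rw [act_neg]; exact act_Q_left (hM.2 Z hZ)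
end
end

section
/- Let Z, Z₁ be a pair of points in Ĥ₂. Then there exists M ∈ Ω̂₂ such that M<Z₁> = iI and M<Z> = iΛ, where Λ = [[λ₁,λ₂],[λ₂,λ₁]] is a real bi-symmetric matrix satisfying λ₁ ≥ λ₂ + 1 and λ₂ ≥ 0. Moreover Λ is unique: if M′ ∈ Ω̂₂ also satisfies M′<Z₁> = iI and M′<Z> = iΛ′ with Λ′ = [[λ₁′,λ₂′],[λ₂′,λ₁′]] real, λ₁′ ≥ λ₂′ + 1, λ₂′ ≥ 0, then Λ′ = Λ. -/
open Matrix Complex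

noncomputable section

open UpperHalfPlane in
lemma rot_exists (w : UpperHalfPlane) : ∃ g : Matrix.SpecialLinearGroup (Fin 2) ℝ,
    g • UpperHalfPlane.I = UpperHalfPlane.I ∧ ((g • w : UpperHalfPlane) : ℂ).re = 0 := by
  set x : ℝ := (w : ℂ).re with hx
  set y : ℝ := (w : ℂ).im with hy
  have hypos : 0 < y := w.im_pos
  set ζ : ℂ := ⟨(1 - (x ^ 2 + y ^ 2)) / 2, -x⟩ with hζ
  set θ : ℝ := ζ.arg / 2 with hθ
  have h1 : ‖ζ‖ * Real.cos ζ.arg = (1 - (x ^ 2 + y ^ 2)) / 2 := Complex.norm_mul_cos_arg ζ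
  have h2 : ‖ζ‖ * Real.sin ζ.arg = -x := Complex.norm_mul_sin_arg ζ
  have h3 : ζ.arg = 2 * θ := by rw [hθ]; ring
  rw [h3] at h1 h2
  have hk : Real.sin (2 * θ) * ((1 - (x ^ 2 + y ^ 2)) / 2) + Real.cos (2 * θ) * x = 0 := by
    linear_combination (-Real.sin (2 * θ)) * h1 + (Real.cos (2 * θ)) * h2
  rw [Real.sin_two_mul, Real.cos_two_mul'] at hk
  have hcs := Real.cos_sq_add_sin_sq θ
  set c := Real.cos θ
  set s := Real.sin θ
  have hdet : Matrix.det !![c, s; -s, c] = 1 := by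
    rw [Matrix.det_fin_two_of]; linear_combination hcs
  obtain ⟨g, h00, h01, h10, h11⟩ : ∃ g : Matrix.SpecialLinearGroup (Fin 2) ℝ,
      g 0 0 = c ∧ g 0 1 = s ∧ g 1 0 = -s ∧ g 1 1 = c := ⟨⟨_, hdet⟩, rfl, rfl, rfl, rfl⟩
  refine ⟨g, ?_, ?_⟩
  · ext
    rw [UpperHalfPlane.coe_specialLinearGroup_apply]
    have hne : ((-s : ℝ) : ℂ) * Complex.I + (c : ℂ) ≠ 0 := by
      intro h
      have a1 := congrArg Complex.re h
      have a2 := congrArg Complex.im h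
      simp at a1 a2
      rw [a1, a2] at hcs
      norm_num at hcs
    simp only [UpperHalfPlane.coe_I, h00, h01, h10, h11]
    rw [div_eq_iff (by simpa using hne)]
    apply Complex.ext <;> simp
  · rw [UpperHalfPlane.coe_specialLinearGroup_apply]
    have hw : (w : ℂ) = ⟨x, y⟩ := rfl
    rw [Complex.div_re, ← add_div]
    refine div_eq_zero_iff.2 (Or.inl ?_)
    rw [hw, h00, h01, h10, h11]
    simp
    linear_combination hk

lemma pair_exists (z w : UpperHalfPlane) : ∃ g : Matrix.SpecialLinearGroup (Fin 2) ℝ,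
    g • z = UpperHalfPlane.I ∧ ∃ s : ℝ, 1 ≤ s ∧ ((g • w : UpperHalfPlane) : ℂ) = Complex.I * s := by
  obtain ⟨g₁, hg₁⟩ := MulAction.exists_smul_eq (Matrix.SpecialLinearGroup (Fin 2) ℝ) z
    UpperHalfPlane.I
  obtain ⟨g₂, hg₂, hre⟩ := rot_exists (g₁ • w)
  set v := g₂ • g₁ • w with hv
  have hpos : 0 < (v : ℂ).im := v.im_pos
  have hvc : (v : ℂ) = Complex.I * ((v : ℂ).im : ℝ) := by
    apply Complex.ext
    · rw [hre]; simp
    · simp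
  by_cases h : 1 ≤ (v : ℂ).im
  · refine ⟨g₂ * g₁, by rw [mul_smul, hg₁, hg₂], _, h, ?_⟩
    rw [mul_smul, ← hv]
    exact hvc
  · have hinv : 1 ≤ ((v : ℂ).im)⁻¹ := (one_le_inv₀ hpos).2 (le_of_not_ge h)
    let S : Matrix.SpecialLinearGroup (Fin 2) ℝ := ⟨!![0, -1; 1, 0], by simp⟩
    refine ⟨S * (g₂ * g₁), ?_, _, hinv, ?_⟩
    · rw [mul_smul, mul_smul, hg₁, hg₂]
      ext
      rw [UpperHalfPlane.coe_specialLinearGroup_apply]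
      simp [S, neg_div]
    · rw [mul_smul, mul_smul, ← hv, UpperHalfPlane.coe_specialLinearGroup_apply]
      generalize (v : ℂ).im = t at hvc hpos
      have ht : (t : ℂ) ≠ 0 := by exact_mod_cast hpos.ne'
      have hI := Complex.I_ne_zero
      rw [hvc]
      simp [S]
      field_simp
      simp

/-- The symplectic matrix built from a pair of elements of `SL(2,ℝ)` and a sign. -/
def Mgh (g h : Mat2R) (e : ℝ) : Mat4 :=
  let f : Fin 2 → Fin 2 → Mat2R := fun i j =>
    !![(g i j + h i j) / 2, (g i j - h i j) / 2; e * (g i j - h i j) / 2, e * (g i j + h i j) / 2]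
  Matrix.fromBlocks (f 0 0) (f 0 1) (f 1 0) (f 1 1)

lemma Mgh_symp (g h : Mat2R) (e : ℝ) (he : e ^ 2 = 1)
    (hg : g 0 0 * g 1 1 - g 0 1 * g 1 0 = 1) (hh : h 0 0 * h 1 1 - h 0 1 * h 1 0 = 1) :
    Mgh g h e ∈ Omega2 := by
  show _ = _
  unfold Mgh Jmat
  simp only [Matrix.fromBlocks_transpose, Matrix.fromBlocks_multiply]
  rw [Matrix.fromBlocks_inj]
  refine ⟨?_, ?_, ?_, ?_⟩ <;> ext i j <;> fin_cases i <;> fin_cases j <;>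
    simp [Matrix.mul_apply, Fin.sum_univ_two] <;> grind

lemma Mgh_act (g h : Matrix.SpecialLinearGroup (Fin 2) ℝ) (e : ℝ) (he : e ^ 2 = 1) (Z : Mat2)
    (u v : UpperHalfPlane) (hu : Z 0 0 + Z 0 1 = u) (hv : Z 0 0 - Z 0 1 = v)
    (hs1 : Z 1 1 = Z 0 0) (hs2 : Z 1 0 = Z 0 1) :
    act (Mgh g h e) Z =
      !![(((g • u : UpperHalfPlane) : ℂ) + ((h • v : UpperHalfPlane) : ℂ)) / 2,
        e * (((g • u : UpperHalfPlane) : ℂ) - ((h • v : UpperHalfPlane) : ℂ)) / 2;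
        e * (((g • u : UpperHalfPlane) : ℂ) - ((h • v : UpperHalfPlane) : ℂ)) / 2,
        (((g • u : UpperHalfPlane) : ℂ) + ((h • v : UpperHalfPlane) : ℂ)) / 2] := by
  have d1 : ((g 1 0 : ℝ) : ℂ) * u + ((g 1 1 : ℝ) : ℂ) ≠ 0 := by
    simpa [UpperHalfPlane.denom] using UpperHalfPlane.denom_ne_zero g u
  have d2 : ((h 1 0 : ℝ) : ℂ) * v + ((h 1 1 : ℝ) : ℂ) ≠ 0 := by
    simpa [UpperHalfPlane.denom] using UpperHalfPlane.denom_ne_zero h v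
  have e1 : ((g • u : UpperHalfPlane) : ℂ) * (((g 1 0 : ℝ) : ℂ) * u + ((g 1 1 : ℝ) : ℂ))
      = ((g 0 0 : ℝ) : ℂ) * u + ((g 0 1 : ℝ) : ℂ) := by
    rw [UpperHalfPlane.coe_specialLinearGroup_apply]
    exact div_mul_cancel₀ _ d1
  have e2 : ((h • v : UpperHalfPlane) : ℂ) * (((h 1 0 : ℝ) : ℂ) * v + ((h 1 1 : ℝ) : ℂ))
      = ((h 0 0 : ℝ) : ℂ) * v + ((h 0 1 : ℝ) : ℂ) := by
    rw [UpperHalfPlane.coe_specialLinearGroup_apply]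
    exact div_mul_cancel₀ _ d2
  generalize ((g • u : UpperHalfPlane) : ℂ) = U at *
  generalize ((h • v : UpperHalfPlane) : ℂ) = V at *
  rw [← hu] at d1 e1
  rw [← hv] at d2 e2
  have heC : (e : ℂ) ^ 2 = 1 := by exact_mod_cast he
  have he0 : (e : ℂ) ≠ 0 := by
    intro h0; rw [h0] at heC; norm_num at heC
  unfold act
  set D := (Mgh g h e).toBlocks₂₁.map Complex.ofReal * Z + (Mgh g h e).toBlocks₂₂.map Complex.ofReal
    with hD
  have hdet : D.det = e * ((((g 1 0 : ℝ) : ℂ) * (Z 0 0 + Z 0 1) + ((g 1 1 : ℝ) : ℂ)) *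
      (((h 1 0 : ℝ) : ℂ) * (Z 0 0 - Z 0 1) + ((h 1 1 : ℝ) : ℂ))) := by
    rw [Matrix.det_fin_two, hD]
    simp [Mgh, Matrix.mul_apply, Fin.sum_univ_two, hs1, hs2]
    ring
  have hunit : IsUnit D.det := by
    rw [hdet]
    exact (mul_ne_zero he0 (mul_ne_zero d1 d2)).isUnit
  refine Eq.trans ?_ (Matrix.mul_nonsing_inv_cancel_right (A := D) _ hunit)
  congr 1
  rw [hD]
  ext i j
  fin_cases i <;> fin_cases j <;>
    simp [Mgh, Matrix.mul_apply, Fin.sum_univ_two, hs1, hs2] <;> grind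

lemma Hhat_split (Z : Mat2) (hZ : Z ∈ Hhat) : ∃ u v : UpperHalfPlane,
    Z 0 0 + Z 0 1 = u ∧ Z 0 0 - Z 0 1 = v := by
  obtain ⟨_, _, h⟩ := hZ
  rw [abs_lt] at h
  exact ⟨⟨Z 0 0 + Z 0 1, by simp; linarith⟩, ⟨Z 0 0 - Z 0 1, by simp; linarith⟩, rfl, rfl⟩

lemma Mgh_mem (g h : Matrix.SpecialLinearGroup (Fin 2) ℝ) (e : ℝ) (he : e ^ 2 = 1) :
    Mgh g h e ∈ OmegaHat := by
  refine ⟨Mgh_symp _ _ _ he ?_ ?_, ?_⟩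
  · rw [← Matrix.det_fin_two]; exact g.det_coe
  · rw [← Matrix.det_fin_two]; exact h.det_coe
  · intro Z hZ
    obtain ⟨u, v, hu, hv⟩ := Hhat_split Z hZ
    rw [Mgh_act g h e he Z u v hu hv hZ.1 hZ.2.1]
    refine ⟨rfl, rfl, ?_⟩
    have p1 : 0 < ((g • u : UpperHalfPlane) : ℂ).im := (g • u).im_pos
    have p2 : 0 < ((h • v : UpperHalfPlane) : ℂ).im := (h • v).im_pos
    generalize ((g • u : UpperHalfPlane) : ℂ) = U at *
    generalize ((h • v : UpperHalfPlane) : ℂ) = V at *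
    have : e = 1 ∨ e = -1 := by
      rcases mul_eq_zero.1 (show (e - 1) * (e + 1) = 0 by linear_combination he) with h | h
      · left; linarith
      · right; linarith
    rw [abs_lt]
    rcases this with rfl | rfl <;> simp <;> constructor <;> linarith

/-- The automorphy factor `CZ + D`. -/
def den (M : Mat4) (Z : Mat2) : Mat2 :=
  M.toBlocks₂₁.map Complex.ofReal * Z + M.toBlocks₂₂.map Complex.ofReal

/-- The numerator `AZ + B`. -/
def nmr (M : Mat4) (Z : Mat2) : Mat2 :=
  M.toBlocks₁₁.map Complex.ofReal * Z + M.toBlocks₁₂.map Complex.ofReal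

lemma symp_rel (M : Mat4) (hM : M ∈ Omega2) (X Y : Mat2) (hX : Xᵀ = X) :
    (den M X)ᵀ * nmr M Y - (nmr M X)ᵀ * den M Y = Y - X := by
  have hM' : Mᵀ * Jmat * M = Jmat := hM
  rw [← Matrix.fromBlocks_toBlocks M] at hM'
  unfold den nmr
  generalize M.toBlocks₁₁ = A at *
  generalize M.toBlocks₁₂ = B at *
  generalize M.toBlocks₂₁ = C at *
  generalize M.toBlocks₂₂ = D at *
  unfold Jmat at hM'
  simp only [Matrix.fromBlocks_transpose, Matrix.fromBlocks_multiply, Matrix.fromBlocks_inj] at hM'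
  simp only [Matrix.mul_zero, Matrix.mul_one, Matrix.mul_neg, zero_add, add_zero,
    Matrix.neg_mul] at hM'
  obtain ⟨h1, h2, h3, h4⟩ := hM'
  have k := fun (P : Mat2R) (Q : Mat2R) (h : P = Q) => congrArg (fun N : Mat2R => N.map (Complex.ofRealHom)) h
  have kneg : ∀ P : Mat2R, (-P).map Complex.ofRealHom = -(P.map Complex.ofRealHom) := by
    intro P; ext i j; simp
  replace h1 := k _ _ h1
  replace h2 := k _ _ h2
  replace h3 := k _ _ h3
  replace h4 := k _ _ h4
  simp only [Matrix.map_add _ (map_add _), kneg, Matrix.map_mul,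
    Matrix.map_zero _ (map_zero _), Matrix.map_one _ (map_zero _) (map_one _),
    Matrix.transpose_map] at h1 h2 h3 h4
  simp only [Matrix.transpose_add, Matrix.transpose_mul, hX]
  change -((C.map Complex.ofReal)ᵀ * A.map Complex.ofReal) + (A.map Complex.ofReal)ᵀ * C.map Complex.ofReal = 0 at h1
  change -((C.map Complex.ofReal)ᵀ * B.map Complex.ofReal) + (A.map Complex.ofReal)ᵀ * D.map Complex.ofReal = 1 at h2
  change -((D.map Complex.ofReal)ᵀ * A.map Complex.ofReal) + (B.map Complex.ofReal)ᵀ * C.map Complex.ofReal = -1 at h3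
  change -((D.map Complex.ofReal)ᵀ * B.map Complex.ofReal) + (B.map Complex.ofReal)ᵀ * D.map Complex.ofReal = 0 at h4
  generalize A.map Complex.ofReal = A at *
  generalize B.map Complex.ofReal = B at *
  generalize C.map Complex.ofReal = C at *
  generalize D.map Complex.ofReal = D at *
  have : (X * Cᵀ + Dᵀ) * (A * Y + B) - (X * Aᵀ + Bᵀ) * (C * Y + D)
    = - (X * (-(Cᵀ * A) + Aᵀ * C) * Y) - X * (-(Cᵀ * B) + Aᵀ * D)
      - (-(Dᵀ * A) + Bᵀ * C) * Y - (-(Dᵀ * B) + Bᵀ * D) := by noncomm_ring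
  rw [this, h1, h2, h3, h4]
  noncomm_ring

lemma det_rel (M : Mat4) (hM : M ∈ Omega2) (X Y V W : Mat2) (hX : Xᵀ = X) (hV : Vᵀ = V)
    (h1 : nmr M X = V * den M X) (h2 : nmr M Y = W * den M Y) :
    (den M X).det * (W - V).det * (den M Y).det = (Y - X).det := by
  have := symp_rel M hM X Y hX
  rw [← this, h1, h2, Matrix.transpose_mul, hV, ← Matrix.det_transpose (den M X),
    ← Matrix.det_mul, ← Matrix.det_mul]
  congr 1
  noncomm_ring

/-- Entrywise conjugation. -/
def cj (Z : Mat2) : Mat2 := Z.map (starRingEnd ℂ)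

lemma cj_mul (X Y : Mat2) : cj (X * Y) = cj X * cj Y := Matrix.map_mul
lemma cj_real (X : Mat2R) : cj (X.map Complex.ofReal) = X.map Complex.ofReal := by
  ext i j; simp [cj]
lemma cj_add (X Y : Mat2) : cj (X + Y) = cj X + cj Y := by
  ext i j; simp [cj]
lemma cj_det (X : Mat2) : (cj X).det = (starRingEnd ℂ) X.det := by
  simp [cj, Matrix.det_fin_two]
lemma cj_den (M : Mat4) (Z : Mat2) : den M (cj Z) = cj (den M Z) := by
  simp [den, cj_add, cj_mul, cj_real]
lemma cj_nmr (M : Mat4) (Z : Mat2) : nmr M (cj Z) = cj (nmr M Z) := by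
  simp [nmr, cj_add, cj_mul, cj_real]

lemma nmr_eq (M : Mat4) (hM : M ∈ OmegaHat) (Z : Mat2) (hZ : Z ∈ Hhat) :
    (den M Z).det ≠ 0 ∧ nmr M Z = act M Z * den M Z := by
  have h := hM.2 Z hZ
  have hne : (den M Z).det ≠ 0 := by
    intro h0
    have : act M Z = 0 := by
      show nmr M Z * (den M Z)⁻¹ = 0
      rw [Matrix.nonsing_inv_apply_not_isUnit _ (by simp [h0]), Matrix.mul_zero]
    rw [this] at h
    obtain ⟨_, _, h⟩ := h
    simp at h
  refine ⟨hne, ?_⟩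
  show _ = nmr M Z * (den M Z)⁻¹ * den M Z
  rw [Matrix.nonsing_inv_mul_cancel_right _ _ hne.isUnit]

lemma Hhat_symm (Z : Mat2) (hZ : Z ∈ Hhat) : Zᵀ = Z := by
  ext i j
  fin_cases i <;> fin_cases j <;> simp [hZ.2.1]

lemma cj_symm (Z : Mat2) (hZ : Zᵀ = Z) : (cj Z)ᵀ = cj Z := by
  unfold cj
  rw [← Matrix.transpose_map, hZ]

/-- The invariants of a pair, up to a common positive factor. -/
lemma invariants (M : Mat4) (hM : M ∈ OmegaHat) (Z Z₁ : Mat2) (hZ : Z ∈ Hhat) (hZ₁ : Z₁ ∈ Hhat)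
    (l₁ l₂ : ℝ) (h1 : act M Z₁ = Complex.I • (1 : Mat2))
    (h2 : act M Z = Complex.I • !![(l₁ : ℂ), (l₂ : ℂ); (l₂ : ℂ), (l₁ : ℂ)]) :
    ∃ k : ℝ, 0 < k ∧ k * |(l₁ - 1) ^ 2 - l₂ ^ 2| = ‖(Z - Z₁).det‖ ∧
      k * |(l₁ + 1) ^ 2 - l₂ ^ 2| = ‖(Z - cj Z₁).det‖ ∧
      k ^ 2 * |l₁ ^ 2 - l₂ ^ 2| * 16 = ‖(Z - cj Z).det‖ * ‖(Z₁ - cj Z₁).det‖ := by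
  obtain ⟨n0, n1⟩ := nmr_eq M hM Z hZ
  obtain ⟨m0, m1⟩ := nmr_eq M hM Z₁ hZ₁
  have n2 : nmr M (cj Z) = cj (act M Z) * den M (cj Z) := by
    rw [cj_nmr, n1, cj_mul, cj_den]
  have m2 : nmr M (cj Z₁) = cj (act M Z₁) * den M (cj Z₁) := by
    rw [cj_nmr, m1, cj_mul, cj_den]
  have sZ := Hhat_symm Z hZ
  have sZ₁ := Hhat_symm Z₁ hZ₁
  have sW := Hhat_symm _ (hM.2 Z hZ)
  have sW₁ := Hhat_symm _ (hM.2 Z₁ hZ₁)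
  have r1 := det_rel M hM.1 Z₁ Z _ _ sZ₁ sW₁ m1 n1
  have r2 := det_rel M hM.1 (cj Z₁) Z _ _ (cj_symm _ sZ₁) (cj_symm _ sW₁) m2 n1
  have r3 := det_rel M hM.1 (cj Z) Z _ _ (cj_symm _ sZ) (cj_symm _ sW) n2 n1
  have r4 := det_rel M hM.1 (cj Z₁) Z₁ _ _ (cj_symm _ sZ₁) (cj_symm _ sW₁) m2 m1
  simp only [cj_den, cj_det] at r2 r3 r4
  rw [h1, h2] at r1 r2
  rw [h2] at r3
  rw [h1] at r4
  have q1 : (Complex.I • !![(l₁ : ℂ), (l₂ : ℂ); (l₂ : ℂ), (l₁ : ℂ)] - Complex.I • (1 : Mat2)).det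
      = ((-((l₁ - 1) ^ 2 - l₂ ^ 2) : ℝ) : ℂ) := by
    rw [Matrix.det_fin_two]
    simp
    linear_combination ((l₁ - 1 : ℂ) ^ 2 - l₂ ^ 2) * Complex.I_sq
  have q2 : (Complex.I • !![(l₁ : ℂ), (l₂ : ℂ); (l₂ : ℂ), (l₁ : ℂ)] - cj (Complex.I • (1 : Mat2))).det
      = ((-((l₁ + 1) ^ 2 - l₂ ^ 2) : ℝ) : ℂ) := by
    rw [Matrix.det_fin_two]
    simp [cj]
    linear_combination ((l₁ + 1 : ℂ) ^ 2 - l₂ ^ 2) * Complex.I_sq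
  have q3 : (Complex.I • !![(l₁ : ℂ), (l₂ : ℂ); (l₂ : ℂ), (l₁ : ℂ)]
      - cj (Complex.I • !![(l₁ : ℂ), (l₂ : ℂ); (l₂ : ℂ), (l₁ : ℂ)])).det
      = ((-(4 * (l₁ ^ 2 - l₂ ^ 2)) : ℝ) : ℂ) := by
    rw [Matrix.det_fin_two]
    simp [cj]
    linear_combination (4 * ((l₁ : ℂ) ^ 2 - l₂ ^ 2)) * Complex.I_sq
  have q4 : (Complex.I • (1 : Mat2) - cj (Complex.I • (1 : Mat2))).det = ((-4 : ℝ) : ℂ) := by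
    rw [Matrix.det_fin_two]
    simp [cj]
    linear_combination 4 * Complex.I_sq
  rw [q1] at r1
  rw [q2] at r2
  rw [q3] at r3
  rw [q4] at r4
  refine ⟨‖(den M Z).det‖ * ‖(den M Z₁).det‖, by positivity, ?_, ?_, ?_⟩
  · rw [← r1, norm_mul, norm_mul, Complex.norm_real, Real.norm_eq_abs, abs_neg]; ring
  · rw [← r2, norm_mul, norm_mul, Complex.norm_real, Real.norm_eq_abs, abs_neg, RCLike.norm_conj]
    ring
  · rw [← r3, ← r4]
    simp only [norm_mul, Complex.norm_real, Real.norm_eq_abs, abs_neg, RCLike.norm_conj, abs_mul]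
    norm_num
    ring

lemma solve_inv (k k' a b a' b' : ℝ) (hk : 0 < k) (hk' : 0 < k') (hb : 0 ≤ b) (hab : b + 1 ≤ a)
    (hb' : 0 ≤ b') (hab' : b' + 1 ≤ a')
    (e1 : k * |(a - 1) ^ 2 - b ^ 2| = k' * |(a' - 1) ^ 2 - b' ^ 2|)
    (e2 : k * |(a + 1) ^ 2 - b ^ 2| = k' * |(a' + 1) ^ 2 - b' ^ 2|)
    (e3 : k ^ 2 * |a ^ 2 - b ^ 2| * 16 = k' ^ 2 * |a' ^ 2 - b' ^ 2| * 16) : a' = a ∧ b' = b := by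
  rw [abs_of_nonneg (by nlinarith), abs_of_nonneg (by nlinarith)] at e1 e2 e3
  set p := a ^ 2 - b ^ 2 with hp
  set p' := a' ^ 2 - b' ^ 2 with hp'
  have p1 : 1 ≤ p := by nlinarith
  have p1' : 1 ≤ p' := by nlinarith
  have s1 : k * (p + 1) = k' * (p' + 1) := by rw [hp, hp']; linarith
  have s2 : k * a = k' * a' := by linarith
  have s3 : k ^ 2 * p = k' ^ 2 * p' := by linarith
  have s4 : k ^ 2 * (p - 1) ^ 2 = k' ^ 2 * (p' - 1) ^ 2 := by
    linear_combination (k * (p + 1) + k' * (p' + 1)) * s1 - 4 * s3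
  have s5 : k * (p - 1) = k' * (p' - 1) := by
    rw [← mul_pow, ← mul_pow] at s4
    exact (pow_left_inj₀ (mul_nonneg hk.le (by linarith)) (mul_nonneg hk'.le (by linarith))
      two_ne_zero).1 s4
  have s6 : k = k' := by linarith
  subst s6
  have ha : a' = a := (mul_left_cancel₀ hk.ne' s2).symm
  refine ⟨ha, ?_⟩
  have hpp : p = p' := by have := mul_left_cancel₀ hk.ne' s5; linarith
  subst ha
  exact (pow_left_inj₀ hb' hb two_ne_zero).1 (by linarith)

/-- reduced form of a pair of points of `Ĥ₂`: some `M ∈ Ω̂₂` sends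
`Z₁` to `iI` and `Z` to `iΛ` with `Λ = [[λ₁,λ₂],[λ₂,λ₁]]`, `λ₁ ≥ λ₂ + 1`,
`λ₂ ≥ 0`; and `Λ` is unique. -/
theorem stmt_8 (Z Z₁ : Mat2) (hZ : Z ∈ Hhat) (hZ₁ : Z₁ ∈ Hhat) :
    ∃ M ∈ OmegaHat, ∃ l₁ l₂ : ℝ, 0 ≤ l₂ ∧ l₂ + 1 ≤ l₁ ∧
      act M Z₁ = Complex.I • (1 : Mat2) ∧
      act M Z = Complex.I • !![(l₁ : ℂ), (l₂ : ℂ); (l₂ : ℂ), (l₁ : ℂ)] ∧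
      ∀ M' ∈ OmegaHat, ∀ l₁' l₂' : ℝ, 0 ≤ l₂' → l₂' + 1 ≤ l₁' →
        act M' Z₁ = Complex.I • (1 : Mat2) →
        act M' Z = Complex.I • !![(l₁' : ℂ), (l₂' : ℂ); (l₂' : ℂ), (l₁' : ℂ)] →
        l₁' = l₁ ∧ l₂' = l₂ := by
  obtain ⟨u, v, hu, hv⟩ := Hhat_split Z hZ
  obtain ⟨u₁, v₁, hu₁, hv₁⟩ := Hhat_split Z₁ hZ₁
  obtain ⟨g, hg, s, hs, hgs⟩ := pair_exists u₁ u
  obtain ⟨h, hh, t, ht, hht⟩ := pair_exists v₁ v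
  obtain ⟨e, he, h1, h2⟩ : ∃ e : ℝ, e ^ 2 = 1 ∧ 0 ≤ e * (s - t) / 2 ∧
      e * (s - t) / 2 + 1 ≤ (s + t) / 2 := by
    by_cases hst : t ≤ s
    · exact ⟨1, by norm_num, by linarith, by linarith⟩
    · exact ⟨-1, by norm_num, by linarith, by linarith⟩
  have a1 : act (Mgh g h e) Z₁ = Complex.I • (1 : Mat2) := by
    rw [Mgh_act g h e he Z₁ u₁ v₁ hu₁ hv₁ hZ₁.1 hZ₁.2.1, hg, hh]
    ext i j
    fin_cases i <;> fin_cases j <;> simp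
  have a2 : act (Mgh g h e) Z = Complex.I •
      !![(((s + t) / 2 : ℝ) : ℂ), ((e * (s - t) / 2 : ℝ) : ℂ);
        ((e * (s - t) / 2 : ℝ) : ℂ), (((s + t) / 2 : ℝ) : ℂ)] := by
    rw [Mgh_act g h e he Z u v hu hv hZ.1 hZ.2.1, hgs, hht]
    ext i j
    fin_cases i <;> fin_cases j <;> simp <;> ring
  refine ⟨Mgh g h e, Mgh_mem g h e he, _, _, h1, h2, a1, a2, ?_⟩
  intro M' hM' l₁' l₂' b1 b2 c1 c2
  obtain ⟨k, hk, i1, i2, i3⟩ := invariants _ (Mgh_mem g h e he) Z Z₁ hZ hZ₁ _ _ a1 a2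
  obtain ⟨k', hk', j1, j2, j3⟩ := invariants M' hM' Z Z₁ hZ hZ₁ _ _ c1 c2
  exact solve_inv k k' _ _ _ _ hk hk' h1 h2 b1 b2 (i1.trans j1.symm) (i2.trans j2.symm)
    (i3.trans j3.symm)
end
end
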